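/- Let g be a pseudo-Riemannian metric and L a g-self-adjoint (1,1)-tensor field satisfying the compatibility equation ∇_u L = (1/2)(u⊗l + (u⊗l)^*) for all tangent vectors u, where ∇ is the Levi-Civita connection of g, l = d(tr L), and A^* is the g-adjoint of A. Then the Nijenhuis torsion of L vanishes: N_L = 0. -/

import Mathlib

open Matrix Polynomial Filter

noncomputable section

variable {ι : Type} [Fintype ι] [DecidableEq ι]

/-- Partial derivative of a real-valued function on `ι → ℝ` in the direction of the
`j`-th coordinate vector. -/
def pd (j : ι) (F : (ι → ℝ) → ℝ) (x : ι → ℝ) : ℝ :=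
  fderiv ℝ F x (Pi.single j 1)

/-- Christoffel symbols `Γ^i_{jk}` of a metric given in local coordinates as a
matrix-valued function. -/
def christoffel (g : (ι → ℝ) → Matrix ι ι ℝ) (x : ι → ℝ) (i j k : ι) : ℝ :=
  (1 / 2) * ∑ m, (g x)⁻¹ i m *
    (pd j (fun y => g y m k) x + pd k (fun y => g y m j) x - pd m (fun y => g y j k) x)

/-- A curve is a geodesic of `g` up to reparametrisation (an unparametrized geodesic):
`γ̈ + Γ(γ̇,γ̇) = α(t)·γ̇` for some function `α`. -/
def IsPregeodesic (g : (ι → ℝ) → Matrix ι ι ℝ) (γ : ℝ → ι → ℝ) : Prop :=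
  ∃ α : ℝ → ℝ, ∀ t : ℝ, ∀ i : ι,
    deriv (fun s => deriv (fun τ => γ τ i) s) t
      + ∑ j, ∑ k, christoffel g (γ t) i j k *
          deriv (fun τ => γ τ j) t * deriv (fun τ => γ τ k) t
      = α t * deriv (fun τ => γ τ i) t

/-- `g` is a pseudo-Riemannian metric (in local coordinates) on the set `U`. -/
structure IsMetricOn (g : (ι → ℝ) → Matrix ι ι ℝ) (U : Set (ι → ℝ)) : Prop where
  smooth : ∀ i j, ContDiffOn ℝ (⊤ : ℕ∞) (fun x => g x i j) U
  symm : ∀ x ∈ U, (g x)ᵀ = g x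
  nondeg : ∀ x ∈ U, IsUnit (g x).det

/-- Two metrics are geodesically equivalent on `U`: they have the same geodesics
considered as unparametrized curves. -/
def GeodEquiv (g gb : (ι → ℝ) → Matrix ι ι ℝ) (U : Set (ι → ℝ)) : Prop :=
  ∀ γ : ℝ → ι → ℝ, ContDiff ℝ (⊤ : ℕ∞) γ → (∀ t, γ t ∈ U) →
    (IsPregeodesic g γ ↔ IsPregeodesic gb γ)

/-- The (1,1)-tensor `L(g,ḡ)^i_j = (det ḡ / det g)^{1/(n+1)} ḡ^{ik} g_{kj}`. -/
def Lten (g gb : (ι → ℝ) → Matrix ι ι ℝ) (x : ι → ℝ) : Matrix ι ι ℝ :=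
  (((gb x).det / (g x).det) ^ ((1 : ℝ) / (Fintype.card ι + 1))) • ((gb x)⁻¹ * g x)

/-- An admissible factorisation `χ = χ₁·χ₂` of the characteristic polynomial of `L`:
both factors are monic of degree ≥ 1, have smooth coefficients, and have no common
complex root at any point of `U`. -/
structure AdmissibleFact (L : (ι → ℝ) → Matrix ι ι ℝ) (U : Set (ι → ℝ))
    (chi1 chi2 : (ι → ℝ) → Polynomial ℝ) : Prop where
  factor : ∀ x ∈ U, (L x).charpoly = chi1 x * chi2 x
  monic1 : ∀ x ∈ U, (chi1 x).Monic
  monic2 : ∀ x ∈ U, (chi2 x).Monic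
  deg1 : ∀ x ∈ U, 1 ≤ (chi1 x).natDegree
  deg2 : ∀ x ∈ U, 1 ≤ (chi2 x).natDegree
  smooth1 : ∀ k, ContDiffOn ℝ (⊤ : ℕ∞) (fun x => (chi1 x).coeff k) U
  smooth2 : ∀ k, ContDiffOn ℝ (⊤ : ℕ∞) (fun x => (chi2 x).coeff k) U
  coprime : ∀ x ∈ U, ¬ ∃ z : ℂ, aeval z (chi1 x) = 0 ∧ aeval z (chi2 x) = 0

/-- The distribution `D = ker χ(L)`. -/
def Dker (L : (ι → ℝ) → Matrix ι ι ℝ) (chi : (ι → ℝ) → Polynomial ℝ) (x : ι → ℝ) :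
    Submodule ℝ (ι → ℝ) :=
  LinearMap.ker (Matrix.mulVecLin (aeval (L x) (chi x)))

/-- A distribution on `U` is integrable (involutive, which is equivalent by the
Frobenius theorem): the Lie bracket of any two smooth vector fields tangent to the
distribution is again tangent to it. -/
def IsIntegrableDist (U : Set (ι → ℝ)) (D : (ι → ℝ) → Submodule ℝ (ι → ℝ)) : Prop :=
  ∀ u v : (ι → ℝ) → ι → ℝ, ContDiffOn ℝ (⊤ : ℕ∞) u U → ContDiffOn ℝ (⊤ : ℕ∞) v U →
    (∀ x ∈ U, u x ∈ D x) → (∀ x ∈ U, v x ∈ D x) →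
    ∀ x ∈ U, (fderiv ℝ v x (u x) - fderiv ℝ u x (v x)) ∈ D x

/-- The Lie derivative of the Christoffel symbols of `g` along a vector field `v`:
`(𝓛_v Γ)^i_{jk} = v^m ∂_m Γ^i_{jk} − (∂_m v^i) Γ^m_{jk} + (∂_j v^m) Γ^i_{mk}
  + (∂_k v^m) Γ^i_{jm} + ∂_j ∂_k v^i`. -/
def lieDerivGamma (g : (ι → ℝ) → Matrix ι ι ℝ) (v : (ι → ℝ) → ι → ℝ)
    (x : ι → ℝ) (i j k : ι) : ℝ :=
  (∑ m, v x m * pd m (fun y => christoffel g y i j k) x)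
  - (∑ m, pd m (fun y => v y i) x * christoffel g x m j k)
  + (∑ m, pd j (fun y => v y m) x * christoffel g x i m k)
  + (∑ m, pd k (fun y => v y m) x * christoffel g x i j m)
  + pd j (fun y => pd k (fun z => v z i) y) x

/-- `v` is a projective vector field for `g` on `U`: its local flow takes
unparametrized geodesics to geodesics; equivalently, the Lie derivative of the
Levi-Civita connection of `g` along `v` is of the projective form
`(𝓛_v Γ)^i_{jk} = δ^i_j φ_k + δ^i_k φ_j` for some 1-form `φ`. -/
def IsProjectiveVF (g : (ι → ℝ) → Matrix ι ι ℝ) (v : (ι → ℝ) → ι → ℝ)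
    (U : Set (ι → ℝ)) : Prop :=
  ContDiffOn ℝ (⊤ : ℕ∞) v U ∧
  ∃ φ : (ι → ℝ) → ι → ℝ, ∀ x ∈ U, ∀ i j k : ι,
    lieDerivGamma g v x i j k
      = (if i = j then φ x k else 0) + (if i = k then φ x j else 0)

/-- The Lie derivative of the metric `g` (a (0,2)-tensor) along `v`. -/
def lieDerivMetric (g : (ι → ℝ) → Matrix ι ι ℝ) (v : (ι → ℝ) → ι → ℝ)
    (x : ι → ℝ) : Matrix ι ι ℝ :=
  Matrix.of fun i j =>
    (∑ m, v x m * pd m (fun y => g y i j) x)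
    + (∑ m, g x m j * pd i (fun y => v y m) x)
    + (∑ m, g x i m * pd j (fun y => v y m) x)

/-- The covariant derivative `∇_r L^i_j` of a (1,1)-tensor w.r.t. the Levi-Civita
connection of `g`. -/
def covDerivT (g L : (ι → ℝ) → Matrix ι ι ℝ) (x : ι → ℝ) (r i j : ι) : ℝ :=
  pd r (fun y => L y i j) x
  + (∑ m, christoffel g x i r m * L x m j)
  - (∑ m, christoffel g x m r j * L x i m)

/-- `g` and `L` satisfy the compatibility equation (24):
`∇_r L^i_j = ½ (δ^i_r l_j + g^{is} l_s g_{rj})` with `l = d tr L`;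
equivalently `g` and `ḡ = (det L)⁻¹ g L⁻¹` are geodesically equivalent. -/
def Compatible (g L : (ι → ℝ) → Matrix ι ι ℝ) (U : Set (ι → ℝ)) : Prop :=
  ∀ x ∈ U, ∀ r i j : ι,
    covDerivT g L x r i j
      = (1 / 2) * ((if i = r then 1 else 0) * pd j (fun y => (L y).trace) x
          + (∑ s, (g x)⁻¹ i s * pd s (fun y => (L y).trace) x) * g x r j)

/-- The Lie bracket of two vector fields on `ι → ℝ`. -/
def vbracket (u v : (ι → ℝ) → ι → ℝ) (x : ι → ℝ) : ι → ℝ :=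
  fderiv ℝ v x (u x) - fderiv ℝ u x (v x)

/-- The vector field `Lu : x ↦ L(x)(u(x))`. -/
def appT (L : (ι → ℝ) → Matrix ι ι ℝ) (u : (ι → ℝ) → ι → ℝ) : (ι → ℝ) → ι → ℝ :=
  fun x => (L x).mulVec (u x)

/-- The Nijenhuis torsion `N_L(u,v) = L²[u,v] − L[Lu,v] − L[u,Lv] + [Lu,Lv]`. -/
def nijenhuis (L : (ι → ℝ) → Matrix ι ι ℝ) (u v : (ι → ℝ) → ι → ℝ)
    (x : ι → ℝ) : ι → ℝ :=
  (L x).mulVec ((L x).mulVec (vbracket u v x))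
  - (L x).mulVec (vbracket (appT L u) v x)
  - (L x).mulVec (vbracket u (appT L v) x)
  + vbracket (appT L u) (appT L v) x

/-- `N_L = 0` on `U`, tested against all smooth vector fields. -/
def NijenhuisZero (L : (ι → ℝ) → Matrix ι ι ℝ) (U : Set (ι → ℝ)) : Prop :=
  ∀ u v : (ι → ℝ) → ι → ℝ, ContDiff ℝ (⊤ : ℕ∞) u → ContDiff ℝ (⊤ : ℕ∞) v →
    ∀ x ∈ U, nijenhuis L u v x = 0

/-- The derivative of a matrix-valued function at `x` in the direction `w`, taken entrywise. -/
def matDeriv (L : (ι → ℝ) → Matrix ι ι ℝ) (x w : ι → ℝ) : Matrix ι ι ℝ :=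
  Matrix.of fun i j => fderiv ℝ (fun y => L y i j) x w

/-- The connection matrix `w ↦ (Γ^i_{rm} w^r)^i_m` of the Levi-Civita connection of `g`. -/
def connMatrix (g : (ι → ℝ) → Matrix ι ι ℝ) (x w : ι → ℝ) : Matrix ι ι ℝ :=
  Matrix.of fun i m => ∑ r, w r * christoffel g x i r m

theorem fderiv_apply_eq_sum_pd (F : (ι → ℝ) → ℝ) (x w : ι → ℝ) :
    fderiv ℝ F x w = ∑ r, w r * pd r F x := by
  conv_lhs => rw [pi_eq_sum_univ' w]
  simp [pd, map_sum]

theorem fderiv_appT {L : (ι → ℝ) → Matrix ι ι ℝ} {u : (ι → ℝ) → ι → ℝ} {x : ι → ℝ}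
    (hL : ∀ i j, DifferentiableAt ℝ (fun y => L y i j) x) (hu : DifferentiableAt ℝ u x)
    (w : ι → ℝ) :
    fderiv ℝ (appT L u) x w = matDeriv L x w *ᵥ u x + L x *ᵥ fderiv ℝ u x w := by
  have hu' : ∀ j, HasFDerivAt (fun y => u y j)
      ((ContinuousLinearMap.proj j).comp (fderiv ℝ u x)) x :=
    hasFDerivAt_pi'.1 hu.hasFDerivAt
  have h : HasFDerivAt (appT L u) (ContinuousLinearMap.pi fun i =>
      ∑ j, (L x i j • (ContinuousLinearMap.proj j).comp (fderiv ℝ u x)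
        + u x j • fderiv ℝ (fun y => L y i j) x)) x := by
    refine hasFDerivAt_pi.2 fun i => ?_
    exact HasFDerivAt.fun_sum fun j _ => (hL i j).hasFDerivAt.mul (hu' j)
  rw [h.fderiv]
  ext i
  simp only [ContinuousLinearMap.coe_pi', _root_.sum_apply,
    _root_.add_apply, _root_.smul_apply, smul_eq_mul,
    ContinuousLinearMap.comp_apply, ContinuousLinearMap.proj_apply, Pi.add_apply, mulVec,
    dotProduct, matDeriv, Matrix.of_apply, Finset.sum_add_distrib]
  rw [add_comm]
  simp only [mul_comm]

/-- The Nijenhuis torsion is algebraic in its vector arguments and the derivative of `L`. -/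
theorem nijenhuis_eq_matDeriv {L : (ι → ℝ) → Matrix ι ι ℝ} {u v : (ι → ℝ) → ι → ℝ}
    {x : ι → ℝ} (hL : ∀ i j, DifferentiableAt ℝ (fun y => L y i j) x)
    (hu : DifferentiableAt ℝ u x) (hv : DifferentiableAt ℝ v x) :
    nijenhuis L u v x =
      matDeriv L x (L x *ᵥ u x) *ᵥ v x - matDeriv L x (L x *ᵥ v x) *ᵥ u x
        - L x *ᵥ (matDeriv L x (u x) *ᵥ v x) + L x *ᵥ (matDeriv L x (v x) *ᵥ u x) := by
  simp only [nijenhuis, vbracket, fderiv_appT hL hu, fderiv_appT hL hv, mulVec_sub, mulVec_add]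
  simp only [appT]
  abel

theorem christoffel_symm {g : (ι → ℝ) → Matrix ι ι ℝ} {U : Set (ι → ℝ)} (hU : IsOpen U)
    (hg : IsMetricOn g U) {x : ι → ℝ} (hx : x ∈ U) (i j k : ι) :
    christoffel g x i j k = christoffel g x i k j := by
  have h : ∀ m, pd m (fun y => g y j k) x = pd m (fun y => g y k j) x := fun m => by
    have he : (fun y => g y j k) =ᶠ[nhds x] fun y => g y k j := by
      filter_upwards [hU.mem_nhds hx] with y hy
      exact congrFun (congrFun (hg.symm y hy) k) j
    rw [pd, pd, he.fderiv_eq]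
  simp only [christoffel, h]
  congr 1
  exact Finset.sum_congr rfl fun m _ => by ring

theorem connMatrix_mulVec_comm {g : (ι → ℝ) → Matrix ι ι ℝ} {U : Set (ι → ℝ)} (hU : IsOpen U)
    (hg : IsMetricOn g U) {x : ι → ℝ} (hx : x ∈ U) (w v : ι → ℝ) :
    connMatrix g x w *ᵥ v = connMatrix g x v *ᵥ w := by
  ext i
  simp only [connMatrix, mulVec, dotProduct, Matrix.of_apply, Finset.sum_mul]
  rw [Finset.sum_comm]
  refine Finset.sum_congr rfl fun r _ => Finset.sum_congr rfl fun m _ => ?_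
  rw [christoffel_symm hU hg hx i r m]
  ring

/-- The compatibility equation solved for the derivative of `L` in the direction `w`. -/
theorem Compatible.matDeriv_eq {g L : (ι → ℝ) → Matrix ι ι ℝ} {U : Set (ι → ℝ)}
    (h : Compatible g L U) {x : ι → ℝ} (hx : x ∈ U) (w : ι → ℝ) :
    matDeriv L x w = L x * connMatrix g x w - connMatrix g x w * L x
      + (1 / 2 : ℝ) • (vecMulVec w (fun j => pd j (fun y => (L y).trace) x)
        + vecMulVec ((g x)⁻¹ *ᵥ fun s => pd s (fun y => (L y).trace) x) (w ᵥ* g x)) := by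
  ext i j
  have hr : ∀ r, pd r (fun y => L y i j) x =
      (∑ m, L x i m * christoffel g x m r j) - (∑ m, christoffel g x i r m * L x m j)
      + (1 / 2) * ((if i = r then 1 else 0) * pd j (fun y => (L y).trace) x
          + (∑ s, (g x)⁻¹ i s * pd s (fun y => (L y).trace) x) * g x r j) := fun r => by
    rw [← h x hx r i j, covDerivT]
    simp only [mul_comm (L x i _)]
    ring
  have h₁ : ∑ r, w r * ∑ m, L x i m * christoffel g x m r j
      = ∑ m, L x i m * ∑ r, w r * christoffel g x m r j := by
    simp only [Finset.mul_sum]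
    rw [Finset.sum_comm]
    exact Finset.sum_congr rfl fun _ _ => Finset.sum_congr rfl fun _ _ => by ring
  have h₂ : ∑ r, w r * ∑ m, christoffel g x i r m * L x m j
      = ∑ m, (∑ r, w r * christoffel g x i r m) * L x m j := by
    simp only [Finset.mul_sum, Finset.sum_mul]
    rw [Finset.sum_comm]
    exact Finset.sum_congr rfl fun _ _ => Finset.sum_congr rfl fun _ _ => by ring
  have h₃ : ∀ a b : ℝ, ∑ r, w r * ((1 / 2) * ((if i = r then 1 else 0) * a + b * g x r j))
      = (1 / 2) * (w i * a + b * ∑ r, w r * g x r j) := fun a b => by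
    have : ∀ r, w r * ((1 / 2) * ((if i = r then 1 else 0) * a + b * g x r j))
        = (if i = r then (1 / 2) * (w r * a) else 0) + (1 / 2) * b * (w r * g x r j) :=
      fun r => by split_ifs <;> ring
    simp only [this, Finset.sum_add_distrib, ← Finset.mul_sum, Finset.sum_ite_eq,
      Finset.mem_univ, if_true]
    ring
  simp only [matDeriv, Matrix.of_apply, fderiv_apply_eq_sum_pd, hr, mul_add, mul_sub,
    Finset.sum_add_distrib, Finset.sum_sub_distrib] at h₃ ⊢
  rw [h₁, h₂, h₃]
  simp [connMatrix, Matrix.mul_apply, vecMulVec_apply, mulVec, vecMul, dotProduct]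

theorem stmt12 {n : ℕ} (U : Set (Fin n → ℝ)) (hU : IsOpen U)
    (g : (Fin n → ℝ) → Matrix (Fin n) (Fin n) ℝ) (hg : IsMetricOn g U)
    (L : (Fin n → ℝ) → Matrix (Fin n) (Fin n) ℝ)
    (hLsmooth : ∀ i j, ContDiffOn ℝ (⊤ : ℕ∞) (fun x => L x i j) U)
    -- `L` is `g`-self-adjoint
    (hLsa : ∀ x ∈ U, (g x * L x)ᵀ = g x * L x)
    -- `g` and `L` satisfy the compatibility equation
    (hLcomp : Compatible g L U) :
    -- then the Nijenhuis torsion of `L` vanishes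
    NijenhuisZero L U := by
  intro u v hu hv x hx
  have hL : ∀ i j, DifferentiableAt ℝ (fun y => L y i j) x := fun i j =>
    ((hLsmooth i j).contDiffAt (hU.mem_nhds hx)).differentiableAt (by simp)
  rw [nijenhuis_eq_matDeriv hL (hu.differentiable (by simp) x) (hv.differentiable (by simp) x)]
  have hsymm : ∀ a b, (a ᵥ* g x) ⬝ᵥ b = (b ᵥ* g x) ⬝ᵥ a := fun a b => by
    rw [← dotProduct_mulVec, dotProduct_comm, ← vecMul_transpose, hg.symm x hx]
  have hsa : ((L x *ᵥ u x) ᵥ* g x) ⬝ᵥ v x = ((L x *ᵥ v x) ᵥ* g x) ⬝ᵥ u x := by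
    rw [hsymm, ← dotProduct_mulVec, mulVec_mulVec, ← hLsa x hx, mulVec_transpose,
      dotProduct_comm, ← dotProduct_mulVec, ← mulVec_mulVec, dotProduct_mulVec, hsymm]
  have hD : ∀ w z, matDeriv L x w *ᵥ z = L x *ᵥ (connMatrix g x w *ᵥ z)
      - connMatrix g x w *ᵥ (L x *ᵥ z)
      + (1 / 2 : ℝ) • (((fun j => pd j (fun y => (L y).trace) x) ⬝ᵥ z) • w
        + ((w ᵥ* g x) ⬝ᵥ z) • ((g x)⁻¹ *ᵥ fun s => pd s (fun y => (L y).trace) x)) :=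
    fun w z => by
      simp [hLcomp.matDeriv_eq hx w, add_mulVec, sub_mulVec, smul_mulVec, vecMulVec_mulVec]
  simp only [hD, mulVec_add, mulVec_sub, mulVec_smul]
  rw [hsa, hsymm (v x) (u x), connMatrix_mulVec_comm hU hg hx (L x *ᵥ v x) (L x *ᵥ u x),
    connMatrix_mulVec_comm hU hg hx (L x *ᵥ u x) (v x),
    connMatrix_mulVec_comm hU hg hx (L x *ᵥ v x) (u x),
    connMatrix_mulVec_comm hU hg hx (v x) (u x)]
  module
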